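/- For every dimension n ≥ 1 there exist δ > 0 and a constant C, depending only on n, such that for every ball B = B(x,r) in ℝⁿ and every function u harmonic on the ball 3B = B(x,3r), one has the reverse Hölder inequality ((1/|B|)∫_{B} |∇u|^{2+δ} dx)^{1/(2+δ)} ≤ C·((1/|2B|)∫_{2B} |∇u|² dx)^{1/2}. -/

import Mathlib

/-!
The proof shows more: with `B = B(x, r)`, the gradient is bounded pointwise on `B` by a dimensional
constant times its mean over `2B`, so any exponent works on the left and `δ = 1` is taken.

The pointwise bound is a mean value property for `∇u`. Let `φ(y) = (1 - |y|²)₊²`. It is radial, and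
`φ(y) y = ∇Ψ(y)` with `Ψ(y) = -(1 - |y|²)₊³ / 6`, also supported in the unit ball. Hence the
derivative of `t ↦ ∫ φ(y) u(z + t y) dy` is `∫ ∇Ψ(y) · ∇u(z + t y) dy`, which integration by parts
turns into `-t ∫ Ψ(y) Δu(z + t y) dy = 0` (`integral_radial_deriv_eq_zero`). So
`∫ φ(y) u(z + r y) dy = u(z) ∫ φ` for all `z ∈ B` (`integral_avgKernel_mul`), and differentiating in
`z` gives the same identity for `∇u` (`integral_avgKernel_smul_fderiv`); only two derivatives of `u`
are used. As `0 ≤ φ ≤ 1`, this bounds `|∇u(z)|` by a multiple of the mean of `|∇u|` over `2B`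
(`norm_fderiv_le`), and Cauchy-Schwarz finishes the proof.

To work with functions defined on the whole space, `u` is first multiplied by a cutoff equal to `1`
on `2B` and supported in `3B` (`exists_cutoff`).
-/

open MeasureTheory Metric ENNReal

/-- `u` is harmonic on `U`: it is `C²` on `U` and `Δu = Σⱼ ∂²u/∂xⱼ² = 0` on `U`. -/
def IsHarmonicOn {n : ℕ} (u : EuclideanSpace ℝ (Fin n) → ℝ)
    (U : Set (EuclideanSpace ℝ (Fin n))) : Prop :=
  ContDiffOn ℝ 2 u U ∧ ∀ x ∈ U,
    ∑ j : Fin n,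
      fderiv ℝ (fun y => fderiv ℝ u y (EuclideanSpace.single j (1 : ℝ))) x
        (EuclideanSpace.single j (1 : ℝ)) = 0

/-! ### The averaging kernel and its potential -/

/-- The unnormalised radial averaging kernel `φ(y) = (1 - |y|²)₊²`, supported in the unit ball. -/
noncomputable def avgKernel {n : ℕ} (y : EuclideanSpace ℝ (Fin n)) : ℝ := (max 0 (1 - ‖y‖ ^ 2)) ^ 2

/-- The function `Ψ(y) = -(1 - |y|²)₊³ / 6`, whose gradient at `y` is `φ(y) y` with
`φ = avgKernel`. -/
noncomputable def avgPotential {n : ℕ} (y : EuclideanSpace ℝ (Fin n)) : ℝ :=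
  -(max 0 (1 - ‖y‖ ^ 2)) ^ 3 / 6

section Kernel

variable {n : ℕ}

lemma avgKernel_eq_zero {y : EuclideanSpace ℝ (Fin n)} (hy : 1 ≤ ‖y‖) : avgKernel y = 0 := by
  have : max 0 (1 - ‖y‖ ^ 2) = 0 := max_eq_left (by nlinarith)
  simp [avgKernel, this]

lemma avgPotential_eq_zero {y : EuclideanSpace ℝ (Fin n)} (hy : 1 ≤ ‖y‖) :
    avgPotential y = 0 := by
  have : max 0 (1 - ‖y‖ ^ 2) = 0 := max_eq_left (by nlinarith)
  simp [avgPotential, this]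

lemma avgKernel_nonneg (y : EuclideanSpace ℝ (Fin n)) : 0 ≤ avgKernel y := sq_nonneg _

lemma avgKernel_le_one (y : EuclideanSpace ℝ (Fin n)) : avgKernel y ≤ 1 := by
  have h0 : 0 ≤ max 0 (1 - ‖y‖ ^ 2) := le_max_left _ _
  have h1 : max 0 (1 - ‖y‖ ^ 2) ≤ 1 := max_le zero_le_one (by nlinarith [sq_nonneg ‖y‖])
  exact pow_le_one₀ h0 h1

lemma continuous_avgKernel : Continuous (avgKernel (n := n)) := by
  unfold avgKernel; fun_prop

lemma continuous_avgPotential : Continuous (avgPotential (n := n)) := by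
  unfold avgPotential; fun_prop

lemma hasCompactSupport_avgKernel : HasCompactSupport (avgKernel (n := n)) :=
  HasCompactSupport.intro (isCompact_closedBall 0 1) fun y hy => avgKernel_eq_zero (by
    simpa using (not_le.1 (by simpa using hy)).le)

lemma hasCompactSupport_avgPotential : HasCompactSupport (avgPotential (n := n)) :=
  HasCompactSupport.intro (isCompact_closedBall 0 1) fun y hy => avgPotential_eq_zero (by
    simpa using (not_le.1 (by simpa using hy)).le)

lemma integral_avgKernel_pos : 0 < ∫ y, avgKernel (n := n) y := by
  refine continuous_avgKernel.integral_pos_of_hasCompactSupport_nonneg_nonzero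
    hasCompactSupport_avgKernel avgKernel_nonneg (x := 0) ?_
  simp [avgKernel]

lemma hasDerivAt_max_zero_cube (s : ℝ) :
    HasDerivAt (fun s : ℝ => (max 0 s) ^ 3) (3 * (max 0 s) ^ 2) s := by
  rcases lt_trichotomy s 0 with hs | rfl | hs
  · rw [max_eq_left hs.le]
    refine ((hasDerivAt_const s (0 : ℝ)).congr_of_eventuallyEq ?_).congr_deriv (by norm_num)
    filter_upwards [gt_mem_nhds hs] with t ht
    simp [max_eq_left ht.le]
  · have h : (fun s : ℝ => (max 0 s) ^ 3) =o[nhds 0] fun s => s := by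
      have h1 : (fun s : ℝ => (max 0 s) ^ 3) =O[nhds 0] fun s => s ^ 3 := by
        refine Asymptotics.isBigO_of_le _ fun t => ?_
        simp only [norm_pow]
        gcongr
        rcases le_total 0 t with ht | ht
        · simp [ht]
        · simp [ht]
      exact h1.trans_isLittleO (by
        simpa using Asymptotics.isLittleO_pow_id (𝕜 := ℝ) (n := 3) (by norm_num))
    rw [hasDerivAt_iff_isLittleO]
    simpa using h
  · rw [max_eq_right hs.le]
    refine ((hasDerivAt_pow 3 s).congr_of_eventuallyEq ?_).congr_deriv (by norm_num)
    filter_upwards [lt_mem_nhds hs] with t ht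
    simp [max_eq_right ht.le]

lemma hasFDerivAt_avgPotential (y : EuclideanSpace ℝ (Fin n)) :
    HasFDerivAt (avgPotential (n := n)) (avgKernel y • innerSL ℝ y) y := by
  have h1 : HasFDerivAt (fun y : EuclideanSpace ℝ (Fin n) => 1 - ‖y‖ ^ 2)
      (-(2 • innerSL ℝ y)) y := by
    simpa using (hasStrictFDerivAt_norm_sq y).hasFDerivAt.const_sub 1
  have h2 := ((hasDerivAt_max_zero_cube (1 - ‖y‖ ^ 2)).neg.div_const 6).comp_hasFDerivAt y h1
  refine h2.congr_fderiv ?_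
  ext w
  simp [avgKernel]
  ring

/-- The identity `φ(y) L(y) = Σⱼ ∂ⱼΨ(y) L(eⱼ)`, i.e. `φ(y) y = ∇Ψ(y)` paired with a linear form. -/
lemma avgKernel_mul_apply (y : EuclideanSpace ℝ (Fin n)) (L : EuclideanSpace ℝ (Fin n) →L[ℝ] ℝ) :
    avgKernel y * L y = ∑ j : Fin n,
      fderiv ℝ avgPotential y (EuclideanSpace.single j (1 : ℝ)) *
        L (EuclideanSpace.single j (1 : ℝ)) := by
  have hy : y = ∑ j, y j • EuclideanSpace.single j (1 : ℝ) := by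
    have := (EuclideanSpace.basisFun (Fin n) ℝ).sum_repr y
    simpa using this.symm
  have hL : L y = ∑ j, y j * L (EuclideanSpace.single j (1 : ℝ)) := by
    conv_lhs => rw [hy]
    simp
  rw [hL, Finset.mul_sum]
  refine Finset.sum_congr rfl fun j _ => ?_
  rw [(hasFDerivAt_avgPotential y).fderiv]
  simp [EuclideanSpace.inner_single_right]
  ring

end Kernel

/-! ### The mean value property -/

section MeanValue

variable {n : ℕ} {v : EuclideanSpace ℝ (Fin n) → ℝ}

/-- The derivative in `t` of `∫ φ(y) v(z + t y) dy` vanishes when `Δv = 0` on `B(z, r)` and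
`0 ≤ t ≤ r`: integration by parts moves a derivative from `Ψ` onto `∇v`, producing `Δv`. -/
lemma integral_radial_deriv_eq_zero (hv : ContDiff ℝ 2 v) {z : EuclideanSpace ℝ (Fin n)} {r t : ℝ}
    (ht0 : 0 ≤ t) (htr : t ≤ r) (hr : 0 < r)
    (hΔ : ∀ x ∈ ball z r, ∑ j : Fin n,
      fderiv ℝ (fun y => fderiv ℝ v y (EuclideanSpace.single j (1 : ℝ))) x
        (EuclideanSpace.single j (1 : ℝ)) = 0) :
    ∫ y, avgKernel y * fderiv ℝ v (z + t • y) y = 0 := by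
  have hv1 : ContDiff ℝ 1 (fderiv ℝ v) := hv.fderiv_right (by norm_num)
  set e : Fin n → EuclideanSpace ℝ (Fin n) := fun j => EuclideanSpace.single j (1 : ℝ) with he
  have hg1 : ∀ j, ContDiff ℝ 1 (fun y => fderiv ℝ v y (e j)) := fun j => hv1.clm_apply contDiff_const
  have hg : ∀ j, ContDiff ℝ 1 (fun y => fderiv ℝ v (z + t • y) (e j)) := fun j =>
    (hg1 j).comp (by fun_prop : ContDiff ℝ 1 fun y : EuclideanSpace ℝ (Fin n) => z + t • y)
  have hgd : ∀ j y, fderiv ℝ (fun y => fderiv ℝ v (z + t • y) (e j)) y (e j) =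
      t * fderiv ℝ (fun y => fderiv ℝ v y (e j)) (z + t • y) (e j) := by
    intro j y
    have h1 : HasFDerivAt (fun y : EuclideanSpace ℝ (Fin n) => z + t • y)
        (t • ContinuousLinearMap.id ℝ _) y := ((hasFDerivAt_id y).const_smul t).const_add z
    have h2 := (((hg1 j).differentiable (by norm_num)) (z + t • y)).hasFDerivAt.comp y h1
    have h3 := h2.fderiv
    rw [Function.comp_def] at h3
    rw [h3]
    simp
  have hΨc := continuous_avgPotential (n := n)
  have hΨs := hasCompactSupport_avgPotential (n := n)
  have hΨdc : ∀ j, Continuous fun y => fderiv ℝ (avgPotential (n := n)) y (e j) := by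
    intro j
    have : (fun y => fderiv ℝ (avgPotential (n := n)) y (e j)) =
        fun y => avgKernel y * inner ℝ y (e j) := by
      ext y
      rw [(hasFDerivAt_avgPotential y).fderiv]; simp
    rw [this]
    exact continuous_avgKernel.mul (by fun_prop)
  have hΨds : ∀ j, HasCompactSupport fun y => fderiv ℝ (avgPotential (n := n)) y (e j) :=
    fun j => hΨs.fderiv_apply (𝕜 := ℝ) (e j)
  have hgdc : ∀ j, Continuous fun y => fderiv ℝ (fun y => fderiv ℝ v (z + t • y) (e j)) y (e j) :=
    fun j => ((hg j).continuous_fderiv (by norm_num)).clm_apply continuous_const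
  have i1 : ∀ j, Integrable fun y => fderiv ℝ (avgPotential (n := n)) y (e j) *
      fderiv ℝ v (z + t • y) (e j) := fun j =>
    ((hΨdc j).mul (hg j).continuous).integrable_of_hasCompactSupport ((hΨds j).mul_right)
  have i2 : ∀ j, Integrable fun y => avgPotential (n := n) y *
      fderiv ℝ (fun y => fderiv ℝ v (z + t • y) (e j)) y (e j) := fun j =>
    (hΨc.mul (hgdc j)).integrable_of_hasCompactSupport hΨs.mul_right
  have i3 : ∀ j, Integrable fun y => avgPotential (n := n) y *
      fderiv ℝ v (z + t • y) (e j) := fun j =>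
    (hΨc.mul (hg j).continuous).integrable_of_hasCompactSupport hΨs.mul_right
  have hparts : ∀ j, ∫ y, fderiv ℝ (avgPotential (n := n)) y (e j) * fderiv ℝ v (z + t • y) (e j) =
      - ∫ y, avgPotential (n := n) y *
        fderiv ℝ (fun y => fderiv ℝ v (z + t • y) (e j)) y (e j) := by
    intro j
    rw [integral_mul_fderiv_eq_neg_fderiv_mul_of_integrable (i1 j) (i2 j) (i3 j)
      (fun x _ => (hasFDerivAt_avgPotential x).differentiableAt)
      (fun x _ => (hg j).differentiable (by norm_num) x), neg_neg]
  simp_rw [avgKernel_mul_apply]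
  rw [integral_finsetSum _ fun j _ => i1 j]
  simp_rw [hparts]
  rw [Finset.sum_neg_distrib, ← integral_finsetSum _ fun j _ => i2 j, neg_eq_zero]
  refine integral_eq_zero_of_ae (Filter.Eventually.of_forall fun y => ?_)
  simp only [Pi.zero_apply]
  rw [← Finset.mul_sum]
  rcases le_or_gt 1 ‖y‖ with hy | hy
  · rw [avgPotential_eq_zero hy, zero_mul]
  · simp_rw [hgd]
    rw [← Finset.mul_sum, hΔ _ _, mul_zero, mul_zero]
    rw [mem_ball_iff_norm, add_sub_cancel_left, norm_smul, Real.norm_of_nonneg ht0]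
    nlinarith [norm_nonneg y]

lemma exists_fderiv_bound (hv : ContDiff ℝ 2 v) (hs : HasCompactSupport v) :
    ∃ M, ∀ y, ‖fderiv ℝ v y‖ ≤ M :=
  (hs.fderiv (𝕜 := ℝ)).exists_bound_of_continuous (hv.continuous_fderiv (by norm_num))

/-- Mean value property: `∫ φ(y) v(z + t y) dy` is constant in `t ∈ [0, r]`, so its values at `t = r`
and `t = 0` agree. -/
lemma integral_avgKernel_mul (hv : ContDiff ℝ 2 v) (hs : HasCompactSupport v)
    {z : EuclideanSpace ℝ (Fin n)} {r : ℝ} (hr : 0 < r)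
    (hΔ : ∀ x ∈ ball z r, ∑ j : Fin n,
      fderiv ℝ (fun y => fderiv ℝ v y (EuclideanSpace.single j (1 : ℝ))) x
        (EuclideanSpace.single j (1 : ℝ)) = 0) :
    ∫ y, avgKernel y * v (z + r • y) = (∫ y, avgKernel (n := n) y) * v z := by
  obtain ⟨M, hM⟩ := exists_fderiv_bound hv hs
  have hvc := hv.continuous
  have hvdc : Continuous (fderiv ℝ v) := hv.continuous_fderiv (by norm_num)
  have hφ := continuous_avgKernel (n := n)
  have hφs := hasCompactSupport_avgKernel (n := n)
  have hderiv : ∀ t : ℝ, HasDerivAt (fun t : ℝ => ∫ y, avgKernel y * v (z + t • y))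
      (∫ y, avgKernel y * fderiv ℝ v (z + t • y) y) t := by
    intro t
    refine (hasDerivAt_integral_of_dominated_loc_of_deriv_le (μ := volume) (s := Set.univ)
      (F := fun t y => avgKernel y * v (z + t • y))
      (F' := fun t y => avgKernel y * fderiv ℝ v (z + t • y) y)
      (bound := fun y => avgKernel y * (M * ‖y‖)) Filter.univ_mem ?_ ?_ ?_ ?_ ?_ ?_).2
    · exact Filter.Eventually.of_forall fun t =>
        (Continuous.aestronglyMeasurable (by fun_prop))
    · exact Continuous.integrable_of_hasCompactSupport (by fun_prop) hφs.mul_right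
    · exact Continuous.aestronglyMeasurable (by fun_prop)
    · refine Filter.Eventually.of_forall fun y t _ => ?_
      rw [norm_mul, Real.norm_of_nonneg (avgKernel_nonneg y)]
      exact mul_le_mul_of_nonneg_left ((fderiv ℝ v _).le_of_opNorm_le (hM _) y)
        (avgKernel_nonneg y)
    · exact Continuous.integrable_of_hasCompactSupport (by fun_prop) hφs.mul_right
    · refine Filter.Eventually.of_forall fun y t _ => ?_
      have h1 : HasDerivAt (fun t : ℝ => z + t • y) y t := by
        simpa using ((hasDerivAt_id t).smul_const y).const_add z
      exact (((hv.differentiable (by norm_num)) (z + t • y)).hasFDerivAt.comp_hasDerivAt t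
        h1).const_mul _
  have := constant_of_has_deriv_right_zero (f := fun t : ℝ => ∫ y, avgKernel y * v (z + t • y))
    (a := 0) (b := r) (fun t _ => (hderiv t).continuousAt.continuousWithinAt) (fun t ht => by
      have h := (hderiv t).hasDerivWithinAt (s := Set.Ici t)
      rwa [integral_radial_deriv_eq_zero hv ht.1 ht.2.le hr hΔ] at h) r ⟨hr.le, le_rfl⟩
  simp only [zero_smul, add_zero] at this
  rw [this, integral_mul_const]

/-- Mean value property for the gradient, obtained by differentiating the one for `v` with respect
to the centre. -/
lemma integral_avgKernel_smul_fderiv (hv : ContDiff ℝ 2 v) (hs : HasCompactSupport v)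
    {x z : EuclideanSpace ℝ (Fin n)} {r : ℝ} (hr : 0 < r) (hz : z ∈ ball x r)
    (hΔ : ∀ w ∈ ball x (2 * r), ∑ j : Fin n,
      fderiv ℝ (fun y => fderiv ℝ v y (EuclideanSpace.single j (1 : ℝ))) w
        (EuclideanSpace.single j (1 : ℝ)) = 0) :
    ∫ y, avgKernel y • fderiv ℝ v (z + r • y) = (∫ y, avgKernel (n := n) y) • fderiv ℝ v z := by
  obtain ⟨M, hM⟩ := exists_fderiv_bound hv hs
  have hvc := hv.continuous
  have hvdc : Continuous (fderiv ℝ v) := hv.continuous_fderiv (by norm_num)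
  have hφ := continuous_avgKernel (n := n)
  have hφs := hasCompactSupport_avgKernel (n := n)
  have hd : HasFDerivAt (fun z => ∫ y, avgKernel y * v (z + r • y))
      (∫ y, avgKernel y • fderiv ℝ v (z + r • y)) z := by
    refine hasFDerivAt_integral_of_dominated_of_fderiv_le (μ := volume) (s := Set.univ)
      (F := fun z y => avgKernel y * v (z + r • y))
      (F' := fun z y => avgKernel y • fderiv ℝ v (z + r • y))
      (bound := fun y => avgKernel y * M) Filter.univ_mem ?_ ?_ ?_ ?_ ?_ ?_
    · exact Filter.Eventually.of_forall fun t =>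
        (Continuous.aestronglyMeasurable (by fun_prop))
    · exact Continuous.integrable_of_hasCompactSupport (by fun_prop) hφs.mul_right
    · exact Continuous.aestronglyMeasurable (by fun_prop)
    · refine Filter.Eventually.of_forall fun y t _ => ?_
      rw [norm_smul, Real.norm_of_nonneg (avgKernel_nonneg y)]
      exact mul_le_mul_of_nonneg_left (hM _) (avgKernel_nonneg y)
    · exact Continuous.integrable_of_hasCompactSupport (by fun_prop) hφs.mul_right
    · refine Filter.Eventually.of_forall fun y w _ => ?_
      have h1 : HasFDerivAt v (fderiv ℝ v (w + r • y)) (w + r • y) :=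
        ((hv.differentiable (by norm_num)) (w + r • y)).hasFDerivAt
      exact ((hasFDerivAt_comp_add_right (r • y)).2 h1).const_mul _
  have hev : (fun z => ∫ y, avgKernel y * v (z + r • y)) =ᶠ[nhds z]
      fun z => (∫ y, avgKernel (n := n) y) * v z := by
    filter_upwards [isOpen_ball.mem_nhds hz] with w hw
    refine integral_avgKernel_mul hv hs hr fun y hy => hΔ y ?_
    rw [mem_ball] at *
    linarith [dist_triangle y w x]
  exact (hd.congr_of_eventuallyEq hev.symm).unique
    (((hv.differentiable (by norm_num)) z).hasFDerivAt.const_mul _)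

/-- The gradient at a point of `B(x, r)` is controlled by its mean over `B(x, 2r)`; the factor
`r⁻ⁿ` comes from the change of variables `y ↦ z + r y`. -/
lemma norm_fderiv_le (hv : ContDiff ℝ 2 v) (hs : HasCompactSupport v)
    {x z : EuclideanSpace ℝ (Fin n)} {r : ℝ} (hr : 0 < r) (hz : z ∈ ball x r)
    (hΔ : ∀ w ∈ ball x (2 * r), ∑ j : Fin n,
      fderiv ℝ (fun y => fderiv ℝ v y (EuclideanSpace.single j (1 : ℝ))) w
        (EuclideanSpace.single j (1 : ℝ)) = 0) :
    (∫ y, avgKernel (n := n) y) * ‖fderiv ℝ v z‖ ≤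
      (r ^ n)⁻¹ * ∫ y in ball x (2 * r), ‖fderiv ℝ v y‖ := by
  have hvdc : Continuous (fderiv ℝ v) := hv.continuous_fderiv (by norm_num)
  have hφ := continuous_avgKernel (n := n)
  have hi : Integrable fun y => ‖fderiv ℝ v y‖ :=
    (hvdc.integrable_of_hasCompactSupport (hs.fderiv (𝕜 := ℝ))).norm
  calc (∫ y, avgKernel (n := n) y) * ‖fderiv ℝ v z‖
      = ‖∫ y, avgKernel y • fderiv ℝ v (z + r • y)‖ := by
        rw [integral_avgKernel_smul_fderiv hv hs hr hz hΔ, norm_smul,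
          Real.norm_of_nonneg integral_avgKernel_pos.le]
    _ ≤ ∫ y, avgKernel y * ‖fderiv ℝ v (z + r • y)‖ := by
        refine (norm_integral_le_integral_norm _).trans_eq ?_
        simp_rw [norm_smul, Real.norm_of_nonneg (avgKernel_nonneg _)]
    _ = (r ^ n)⁻¹ * ∫ y, avgKernel (r⁻¹ • y) * ‖fderiv ℝ v (z + y)‖ := by
        have := Measure.integral_comp_smul_of_nonneg (volume : Measure (EuclideanSpace ℝ (Fin n)))
          (fun y => avgKernel (r⁻¹ • y) * ‖fderiv ℝ v (z + y)‖) r (hR := hr.le)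
        simpa [smul_smul, inv_mul_cancel₀ hr.ne'] using this
    _ = (r ^ n)⁻¹ * ∫ y, avgKernel (r⁻¹ • (y - z)) * ‖fderiv ℝ v y‖ := by
        congr 1
        rw [← integral_add_left_eq_self (fun y => avgKernel (r⁻¹ • (y - z)) * ‖fderiv ℝ v y‖) z]
        simp
    _ ≤ (r ^ n)⁻¹ * ∫ y in ball x (2 * r), ‖fderiv ℝ v y‖ := by
        refine mul_le_mul_of_nonneg_left ?_ (by positivity)
        rw [← integral_indicator measurableSet_ball]
        refine integral_mono ?_ (hi.indicator measurableSet_ball) fun y => ?_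
        · exact Continuous.integrable_of_hasCompactSupport (by fun_prop)
            (hs.fderiv (𝕜 := ℝ)).norm.mul_left
        · by_cases hy : y ∈ ball x (2 * r)
          · simp only [Set.indicator_of_mem hy]
            exact mul_le_of_le_one_left (norm_nonneg _) (avgKernel_le_one _)
          · simp only [Set.indicator_of_notMem hy]
            rw [avgKernel_eq_zero, zero_mul]
            rw [norm_smul, norm_inv, Real.norm_of_nonneg hr.le, ← div_eq_inv_mul, le_div_iff₀ hr,
              one_mul, ← dist_eq_norm]
            rw [mem_ball, not_lt] at hy
            rw [mem_ball] at hz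
            linarith [dist_triangle y z x]

end MeanValue

/-! ### Reduction to compactly supported functions and conclusion -/

/-- A function harmonic on `3B` agrees on `2B`, with its derivatives, with a compactly supported
`C²` function on the whole space. -/
lemma exists_cutoff {n : ℕ} {u : EuclideanSpace ℝ (Fin n) → ℝ} {x : EuclideanSpace ℝ (Fin n)}
    {r : ℝ} (hr : 0 < r) (hu : IsHarmonicOn u (ball x (3 * r))) :
    ∃ v : EuclideanSpace ℝ (Fin n) → ℝ, ContDiff ℝ 2 v ∧ HasCompactSupport v ∧
      (∀ y ∈ ball x (2 * r), fderiv ℝ v y = fderiv ℝ u y) ∧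
      ∀ w ∈ ball x (2 * r), ∑ j : Fin n,
        fderiv ℝ (fun y => fderiv ℝ v y (EuclideanSpace.single j (1 : ℝ))) w
          (EuclideanSpace.single j (1 : ℝ)) = 0 := by
  obtain ⟨hC, hΔ⟩ := hu
  let χ : ContDiffBump x := ⟨2 * r, 5 / 2 * r, by positivity, by linarith⟩
  have hfd : ∀ y ∈ ball x (2 * r), fderiv ℝ (fun y => χ y * u y) y = fderiv ℝ u y := by
    intro y hy
    refine Filter.EventuallyEq.fderiv_eq ?_
    filter_upwards [χ.eventuallyEq_one_of_mem_ball hy] with w hw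
    simp [hw]
  refine ⟨fun y => χ y * u y, ?_, χ.hasCompactSupport.mul_right, hfd, fun w hw => ?_⟩
  · refine contDiff_iff_contDiffAt.2 fun y => ?_
    by_cases hy : y ∈ tsupport fun y => χ y * u y
    swap
    · exact contDiffAt_const.congr_of_eventuallyEq (notMem_tsupport_iff_eventuallyEq.1 hy)
    have hy' : y ∈ ball x (3 * r) := by
      have h1 := tsupport_mul_subset_left hy
      rw [χ.tsupport_eq, mem_closedBall] at h1
      rw [mem_ball]
      exact h1.trans_lt (by change 5 / 2 * r < 3 * r; linarith)
    exact χ.contDiffAt.mul (hC.contDiffAt (isOpen_ball.mem_nhds hy'))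
  · rw [← hΔ w (ball_subset_ball (by linarith) hw)]
    refine Finset.sum_congr rfl fun j _ => ?_
    congr 1
    refine Filter.EventuallyEq.fderiv_eq ?_
    filter_upwards [isOpen_ball.mem_nhds hw] with y hy
    rw [hfd y hy]

/-- Cauchy-Schwarz: `∫ₛ f ≤ μ(s) · (mean of f² over s)^{1/2}`. -/
lemma lintegral_le_average_sq {α : Type*} [MeasurableSpace α] {μ : Measure α} {s : Set α}
    (h0 : μ s ≠ 0) (ht : μ s ≠ ⊤) {f : α → ℝ≥0∞} (hf : AEMeasurable f (μ.restrict s)) :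
    ∫⁻ y in s, f y ∂μ ≤ μ s * ((μ s)⁻¹ * ∫⁻ y in s, f y ^ (2 : ℝ) ∂μ) ^ (1 / (2 : ℝ)) := by
  have h := ENNReal.lintegral_mul_le_Lp_mul_Lq (μ.restrict s) Real.HolderConjugate.two_two
    hf (aemeasurable_const (b := (1 : ℝ≥0∞)))
  simp only [Pi.mul_apply, mul_one, ENNReal.one_rpow, lintegral_const, one_mul,
    Measure.restrict_apply MeasurableSet.univ, Set.univ_inter] at h
  refine h.trans_eq ?_
  rw [ENNReal.mul_rpow_of_nonneg _ _ (by norm_num), ← mul_assoc, mul_comm]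
  congr 1
  rw [ENNReal.inv_rpow, ← ENNReal.rpow_neg]
  nth_rewrite 2 [← ENNReal.rpow_one (μ s)]
  rw [← ENNReal.rpow_add _ _ h0 ht]
  norm_num

/-- reverse Hölder inequality `(RH_{2+δ})` for gradients of
harmonic functions: there are `δ > 0` and `C` depending only on `n` such that
for `u` harmonic on `3B`,
`((1/|B|)∫_B |∇u|^{2+δ})^{1/(2+δ)} ≤ C ((1/|2B|)∫_{2B} |∇u|²)^{1/2}`. -/
theorem statement11 (n : ℕ) (hn : 1 ≤ n) :
    ∃ δ C : ℝ, 0 < δ ∧ 0 < C ∧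
      ∀ (x : EuclideanSpace ℝ (Fin n)) (r : ℝ), 0 < r →
      ∀ u : EuclideanSpace ℝ (Fin n) → ℝ, IsHarmonicOn u (ball x (3 * r)) →
        ((volume (ball x r))⁻¹ *
            ∫⁻ y in ball x r, (‖fderiv ℝ u y‖₊ : ℝ≥0∞) ^ (2 + δ)) ^ (1 / (2 + δ)) ≤
          ENNReal.ofReal C *
            ((volume (ball x (2 * r)))⁻¹ *
              ∫⁻ y in ball x (2 * r),
                (‖fderiv ℝ u y‖₊ : ℝ≥0∞) ^ (2 : ℝ)) ^ (1 / (2 : ℝ)) := by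
  set K : ℝ := ∫ y, avgKernel (n := n) y with hK
  have hK0 : 0 < K := integral_avgKernel_pos
  set ω : ℝ := (volume (ball (0 : EuclideanSpace ℝ (Fin n)) 1)).toReal with hω
  have hω0 : 0 < ω := ENNReal.toReal_pos (measure_ball_pos _ _ one_pos).ne' measure_ball_lt_top.ne
  refine ⟨1, K⁻¹ * (2 ^ n * ω), one_pos, by positivity, fun x r hr u hu => ?_⟩
  obtain ⟨v, hv, hs, hvu, hΔ⟩ := exists_cutoff hr hu
  have hvdc : Continuous (fderiv ℝ v) := hv.continuous_fderiv (by norm_num)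
  have hi : Integrable fun y => ‖fderiv ℝ v y‖ :=
    (hvdc.integrable_of_hasCompactSupport (hs.fderiv (𝕜 := ℝ))).norm
  have hA0 : volume (ball x (2 * r)) ≠ 0 := (measure_ball_pos _ _ (by positivity)).ne'
  have hAt : volume (ball x (2 * r)) ≠ ⊤ := measure_ball_lt_top.ne
  have hA : volume (ball x (2 * r)) = ENNReal.ofReal ((2 * r) ^ n * ω) := by
    rw [Measure.addHaar_ball_of_pos _ _ (by positivity), ENNReal.ofReal_mul (by positivity), hω,
      ENNReal.ofReal_toReal measure_ball_lt_top.ne, finrank_euclideanSpace_fin]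
  set R : ℝ≥0∞ := ((volume (ball x (2 * r)))⁻¹ * ∫⁻ y in ball x (2 * r),
    (‖fderiv ℝ u y‖₊ : ℝ≥0∞) ^ (2 : ℝ)) ^ (1 / (2 : ℝ)) with hR
  have hRv : R = ((volume (ball x (2 * r)))⁻¹ * ∫⁻ y in ball x (2 * r),
      (‖fderiv ℝ v y‖₊ : ℝ≥0∞) ^ (2 : ℝ)) ^ (1 / (2 : ℝ)) := by
    rw [hR]
    congr 2
    exact setLIntegral_congr_fun measurableSet_ball fun y hy => by simp only [hvu y hy]
  have hsup : ∀ z ∈ ball x r,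
      (‖fderiv ℝ u z‖₊ : ℝ≥0∞) ≤ ENNReal.ofReal (K⁻¹ * (2 ^ n * ω)) * R := by
    intro z hz
    rw [← hvu z (ball_subset_ball (by linarith) hz)]
    have h1 : ‖fderiv ℝ v z‖ ≤ (K⁻¹ * (r ^ n)⁻¹) * ∫ y in ball x (2 * r), ‖fderiv ℝ v y‖ := by
      rw [mul_assoc, ← div_eq_inv_mul, le_div_iff₀ hK0, mul_comm]
      exact norm_fderiv_le hv hs hr hz hΔ
    calc (‖fderiv ℝ v z‖₊ : ℝ≥0∞) = ENNReal.ofReal ‖fderiv ℝ v z‖ :=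
          (ofReal_norm _).symm
      _ ≤ ENNReal.ofReal (K⁻¹ * (r ^ n)⁻¹) *
            ∫⁻ y in ball x (2 * r), (‖fderiv ℝ v y‖₊ : ℝ≥0∞) := by
          refine (ENNReal.ofReal_le_ofReal h1).trans_eq ?_
          rw [ENNReal.ofReal_mul (by positivity), ofReal_integral_eq_lintegral_ofReal
            hi.integrableOn (Filter.Eventually.of_forall fun y => norm_nonneg _)]
          simp_rw [ofReal_norm]
          rfl
      _ ≤ ENNReal.ofReal (K⁻¹ * (r ^ n)⁻¹) * (volume (ball x (2 * r)) * R) := by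
          rw [hRv]
          gcongr
          exact lintegral_le_average_sq hA0 hAt
            hvdc.nnnorm.measurable.coe_nnreal_ennreal.aemeasurable
      _ = ENNReal.ofReal (K⁻¹ * (2 ^ n * ω)) * R := by
          rw [hA, ← mul_assoc, ← ENNReal.ofReal_mul (by positivity)]
          congr 2
          rw [mul_pow]
          field_simp
  set S := ENNReal.ofReal (K⁻¹ * (2 ^ n * ω)) * R
  calc _ ≤ ((volume (ball x r))⁻¹ * ∫⁻ _ in ball x r, S ^ (2 + 1 : ℝ)) ^ (1 / (2 + 1) : ℝ) := by
        gcongr ((volume (ball x r))⁻¹ * ?_) ^ _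
        exact setLIntegral_mono measurable_const fun z hz =>
          ENNReal.rpow_le_rpow (hsup z hz) (by norm_num)
    _ = S := by
        rw [setLIntegral_const, mul_comm, mul_assoc, ENNReal.mul_inv_cancel
          (measure_ball_pos _ _ hr).ne' measure_ball_lt_top.ne, mul_one, ← ENNReal.rpow_mul]
        norm_num
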